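/- For every nonnegative integer k: the group W is finite, and in the group algebra ℤ[ℤ^6] one has 𝒜(Z^ϱ) · WGF(L6''(k);Z) = 𝒜(Z^{kω_{6'} + ϱ}). (By the Weyl character formula, this says that the weight generating function of L6''(k) equals the character char_{E6}(kω_{6'}) of the irreducible highest-weight-kω_{6'} representation of the type E6 simple Lie algebra.) -/

import Mathlib

noncomputable section

namespace CL

variable {N : Type} [DecidableEq N] [Fintype N]

/-- One-step relation generating the partial order on the poset of positions. -/
def step (adj : N → N → Prop) (pos : Finset (N × ℕ)) (x y : N × ℕ) : Prop :=
  x ∈ pos ∧ y ∈ pos ∧ adj x.1 y.1 ∧ y.2 = x.2 + 1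

/-- The partial order on positions, generated by `step`. -/
def ple (adj : N → N → Prop) (pos : Finset (N × ℕ)) : N × ℕ → N × ℕ → Prop :=
  Relation.ReflTransGen (step adj pos)

/-- The lattice of `ℕ`-labellings of the positions which are bounded by `k`, order-reversing,
and satisfy a further constraint `extra`. -/
def Elt (adj : N → N → Prop) (pos : Finset (N × ℕ)) (k : ℕ)
    (extra : ({x : N × ℕ // x ∈ pos} → ℕ) → Prop) : Type :=
  {c : {x : N × ℕ // x ∈ pos} → ℕ //
    (∀ x, c x ≤ k) ∧ (∀ x y, ple adj pos y.1 x.1 → c x ≤ c y) ∧ extra c}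

variable {adj : N → N → Prop} {pos : Finset (N × ℕ)} {k : ℕ}
  {extra : ({x : N × ℕ // x ∈ pos} → ℕ) → Prop}

instance : Finite (Elt adj pos k extra) := by
  apply Finite.of_injective
    (fun c : Elt adj pos k extra =>
      fun x => (⟨c.1 x, Nat.lt_succ_of_le (c.2.1 x)⟩ : Fin (k + 1)))
  intro c d h
  apply Subtype.ext
  funext x
  exact congrArg Fin.val (congrFun h x)

instance : Fintype (Elt adj pos k extra) := Fintype.ofFinite _

instance : DecidableEq (Elt adj pos k extra) := by unfold Elt; infer_instance

/-- Componentwise comparison of labellings. -/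
def elLe (r s : Elt adj pos k extra) : Prop := ∀ x, r.1 x ≤ s.1 x

/-- The covering edge of color `i`: exactly one entry, at a position of color `i`,
is increased by one. -/
def edge (i : N) (r s : Elt adj pos k extra) : Prop :=
  ∃ x : {x : N × ℕ // x ∈ pos}, x.1.1 = i ∧ s.1 x = r.1 x + 1 ∧
    ∀ y, y ≠ x → s.1 y = r.1 y

instance (i : N) (r s : Elt adj pos k extra) : Decidable (edge i r s) := by
  unfold edge; infer_instance

/-- The rank function: the sum of all entries. -/
def rk (t : Elt adj pos k extra) : ℕ := ∑ x ∈ pos.attach, t.1 x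

/-- The connected component of `t` in the graph of color-`i` covering edges. -/
def comp (i : N) (t : Elt adj pos k extra) : Set (Elt adj pos k extra) :=
  {s | Relation.ReflTransGen (fun a b => edge i a b ∨ edge i b a) t s}

/-- The integer `m_i(t) = (ρ(t) − min ρ on comp_i(t)) − (max ρ on comp_i(t) − ρ(t))`. -/
def mwt (i : N) (t : Elt adj pos k extra) : ℤ :=
  ((rk t : ℤ) - ((sInf (rk '' comp i t) : ℕ) : ℤ)) -
    (((sSup (rk '' comp i t) : ℕ) : ℤ) - (rk t : ℤ))

end CL

namespace CL

variable {N : Type} [DecidableEq N] [Fintype N]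

/-- The matrix of the simple reflection `S_i : μ ↦ μ − μ_i·(row i of A)`, acting via `mulVec`. -/
def refl (A : N → N → ℤ) (i : N) : Matrix N N ℤ :=
  fun j l => (if j = l then 1 else 0) - (if l = i then A i j else 0)

/-- The Weyl group: the group of integer matrices generated by the simple reflections
(each `S_i` is an involution, so the generated submonoid is a group). -/
def weyl (A : N → N → ℤ) : Submonoid (Matrix N N ℤ) :=
  Submonoid.closure (Set.range (refl A))

/-- The alternant `𝒜(Z^ν) = Σ_{w∈W} det(w)·Z^{w(ν)}` in the group algebra `ℤ[ℤ^N]`. -/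
def alt (A : N → N → ℤ) (ν : N → ℤ) : AddMonoidAlgebra ℤ (N → ℤ) :=
  ∑ᶠ w ∈ (weyl A : Set (Matrix N N ℤ)),
    AddMonoidAlgebra.single (Matrix.mulVec w ν) (Matrix.det w)

end CL

namespace CL

variable {N : Type} [DecidableEq N] [Fintype N]

/-- The weight generating function `WGF(L;Z) = Σ_{t∈L} Z^{wt(t)}` in `ℤ[ℤ^N]`. -/
def wgf (adj : N → N → Prop) (pos : Finset (N × ℕ)) (k : ℕ)
    (extra : ({x : N × ℕ // x ∈ pos} → ℕ) → Prop) : AddMonoidAlgebra ℤ (N → ℤ) :=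
  ∑ t : Elt adj pos k extra, AddMonoidAlgebra.single (fun i => mwt i t) 1

end CL

/-! ### Type `E₆` data -/

/-- The nodes `1', 2', 3', 4', 5', 6'` of the `E₆` Dynkin diagram. -/
inductive N6 : Type
  | m1 | m2 | m3 | m4 | m5 | m6
  deriving DecidableEq

instance : Fintype N6 where
  elems := {N6.m1, N6.m2, N6.m3, N6.m4, N6.m5, N6.m6}
  complete := by intro x; cases x <;> decide

open N6

/-- Adjacency in the `E₆` Dynkin diagram: edges `1'-2', 2'-3', 3'-4', 3'-5', 5'-6'`. -/
abbrev adj6 : N6 → N6 → Prop := fun a b =>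
  (a, b) ∈ ([(m1, m2), (m2, m3), (m3, m4), (m3, m5), (m5, m6)] : List (N6 × N6)) ∨
  (b, a) ∈ ([(m1, m2), (m2, m3), (m3, m4), (m3, m5), (m5, m6)] : List (N6 × N6))

/-- The Cartan matrix of type `E₆`, indexed by the nodes. -/
def A6 : N6 → N6 → ℤ := fun i j => if i = j then 2 else if adj6 i j then -1 else 0

/-- The 24 (color, rank) positions of the poset `P24 = 𝒫`. -/
def pos24 : Finset (N6 × ℕ) :=
  {(m1, 0), (m2, 1), (m3, 2), (m4, 3), (m5, 3), (m3, 4), (m6, 4), (m2, 5), (m5, 5),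
   (m1, 6), (m3, 6), (m2, 7), (m4, 7), (m1, 8), (m3, 8), (m2, 9), (m5, 9), (m3, 10),
   (m6, 10), (m4, 11), (m5, 11), (m3, 12), (m2, 13), (m1, 14)}

/-- The 16 (color, rank) positions of the minuscule poset `P16' = P_{E₆}(ω₁')`. -/
def pos16p : Finset (N6 × ℕ) :=
  {(m6, 0), (m5, 1), (m3, 2), (m2, 3), (m4, 3), (m1, 4), (m3, 4), (m2, 5), (m5, 5),
   (m3, 6), (m6, 6), (m4, 7), (m5, 7), (m3, 8), (m2, 9), (m1, 10)}

/-- The 16 (color, rank) positions of the minuscule poset `P16'' = P_{E₆}(ω₆')`. -/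
def pos16pp : Finset (N6 × ℕ) :=
  {(m1, 0), (m2, 1), (m3, 2), (m4, 3), (m5, 3), (m3, 4), (m6, 4), (m2, 5), (m5, 5),
   (m1, 6), (m3, 6), (m2, 7), (m4, 7), (m3, 8), (m5, 9), (m6, 10)}

/-- The extra constraints on elements of `L6(a,b)`: `c((1',8)) ≤ a` and `c((1',6)) ≥ a`. -/
def extra6 (a : ℕ) : ({x : N6 × ℕ // x ∈ pos24} → ℕ) → Prop := fun c =>
  c ⟨(m1, 8), by decide⟩ ≤ a ∧ a ≤ c ⟨(m1, 6), by decide⟩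

/-- The lattice `L6(a,b) = L_{E₆}(aω₁' + bω₆')`. -/
abbrev L6ab (a b : ℕ) : Type := CL.Elt adj6 pos24 (a + b) (extra6 a)

/-- The lattice `L6'(k) = L_{E₆}(kω₁')`. -/
abbrev L6p (k : ℕ) : Type := CL.Elt adj6 pos16p k (fun _ => True)

/-- The lattice `L6''(k) = L_{E₆}(kω₆')`. -/
abbrev L6pp (k : ℕ) : Type := CL.Elt adj6 pos16pp k (fun _ => True)

/-!
Reflecting all values of one color `i` in the intervals in which they may move freely permutes the
labelings and acts on weights by `S_i`. This makes the weights symmetric under `W`, so that the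
left-hand side is the sum of the alternants of `ϱ + wt(t)` over all labelings `t`. For a fixed
nonempty set `D = {x | t x < k}` with a minimal element `x₀`, reflecting the values below `k` in
the color of `x₀` with the cap `k - 1` in place of `k` is an involution that preserves `D` and
acts on `ϱ + wt(t)` by a simple reflection; hence these alternants cancel, and only the constant
labeling `k` survives. Both reflections act on weights as stated because raising a value of color
`i` adds the `i`-th row of the Cartan matrix to the weight: two values `a`, `b` between consecutive
positions of a color enter its weight through `-(max a b + min a b) = -(a + b)`. Finally, `W` is
finite because it permutes the labelings with values in `{0, 1}`, whose weights span.
-/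

/-! ### Labelings of a colored ranked set -/

namespace CL

section Labelings

variable {N : Type} {G : SimpleGraph N} {pos : Finset (N × ℕ)} {k : ℕ}

/-- The order-reversing labelings with values in `{0, …, k}`, without further constraint. -/
abbrev Labeling (G : SimpleGraph N) (pos : Finset (N × ℕ)) (k : ℕ) : Type :=
  Elt G.Adj pos k (fun _ => True)

/-- The covering relation of the poset generated by `step`, on the type of positions. -/
abbrev Covers (G : SimpleGraph N) (x y : pos) : Prop :=
  G.Adj x.1.1 y.1.1 ∧ y.1.2 = x.1.2 + 1

lemma Covers.step {x y : pos} (h : Covers G x y) : step G.Adj pos x y :=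
  ⟨x.2, y.2, h⟩

lemma Covers.color_ne {x y : pos} (h : Covers G x y) : x.1.1 ≠ y.1.1 :=
  G.ne_of_adj h.1

lemma rank_lt_of_ple {a b : N × ℕ} (h : ple G.Adj pos a b) (hab : a ≠ b) : a.2 < b.2 := by
  have hle : ∀ c, ple G.Adj pos a c → a.2 ≤ c.2 := by
    intro c hc
    induction hc with
    | refl => exact le_rfl
    | tail _ hs ih => have := hs.2.2.2; omega
  rcases h.cases_tail with rfl | ⟨c, hac, hcb⟩
  · exact absurd rfl hab
  · have := hle c hac
    have := hcb.2.2.2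
    omega

lemma ple_or_ple_of_isChain {adj : N → N → Prop} {l : List (N × ℕ)} (hl : l.IsChain (step adj pos))
    {x y : N × ℕ} (hx : x ∈ l) (hy : y ∈ l) : ple adj pos x y ∨ ple adj pos y x := by
  have : Trans (ple adj pos) (ple adj pos) (ple adj pos) := ⟨Relation.ReflTransGen.trans⟩
  have : Std.Symm fun x y => ple adj pos x y ∨ ple adj pos y x := ⟨fun _ _ => Or.symm⟩
  have hpair : l.Pairwise (ple adj pos) := (hl.imp fun _ _ => .single).pairwise
  exact List.Pairwise.forall_of_forall (R := fun x y => ple adj pos x y ∨ ple adj pos y x)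
    (fun _ _ => .inl .refl) (hpair.imp Or.inl) hx hy

lemma Elt.le_of_covers (t : Labeling G pos k) {x y : pos} (h : Covers G x y) :
    t.1 y ≤ t.1 x :=
  t.2.2.1 _ _ (.single h.step)

/-- A labeling, given by a function that decreases along the covering relations. -/
def Elt.ofCovers (c : pos → ℕ) (hk : ∀ x, c x ≤ k)
    (hc : ∀ x y : pos, Covers G x y → c y ≤ c x) : Labeling G pos k :=
  ⟨c, hk, fun x y hyx => by
    obtain ⟨x, hx⟩ := x
    obtain ⟨y, hy⟩ := y
    change ple G.Adj pos y x at hyx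
    induction hyx with
    | refl => exact le_rfl
    | tail _ hs ih => exact (hc ⟨_, hs.1⟩ ⟨_, hx⟩ hs.2.2).trans (ih hs.1), trivial⟩

variable [DecidableRel G.Adj]

/-- The positions covering `x`. -/
def upperCovers (G : SimpleGraph N) [DecidableRel G.Adj] (x : pos) : Finset pos :=
  {y | Covers G x y}

/-- The positions covered by `x`. -/
def lowerCovers (G : SimpleGraph N) [DecidableRel G.Adj] (x : pos) : Finset pos :=
  {y | Covers G y x}

@[simp] lemma mem_upperCovers {x y : pos} : y ∈ upperCovers G x ↔ Covers G x y := by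
  simp [upperCovers]

@[simp] lemma mem_lowerCovers {x y : pos} : y ∈ lowerCovers G x ↔ Covers G y x := by
  simp [lowerCovers]

/-- The least value that an order-reversing labeling agreeing with `c` away from `x` can take
at `x`. -/
def floor (G : SimpleGraph N) [DecidableRel G.Adj] (c : pos → ℕ) (x : pos) : ℕ :=
  (upperCovers G x).sup c

/-- The greatest value, subject to the bound `K`, that an order-reversing labeling agreeing with
`c` away from `x` can take at `x`. -/
def ceil (G : SimpleGraph N) [DecidableRel G.Adj] (K : ℕ) (c : pos → ℕ) (x : pos) : ℕ :=
  (lowerCovers G x).fold min K c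

lemma le_floor {c : pos → ℕ} {x y : pos} (h : Covers G x y) : c y ≤ floor G c x :=
  Finset.le_sup (mem_upperCovers.2 h)

lemma ceil_le {K : ℕ} {c : pos → ℕ} {x y : pos} (h : Covers G x y) : ceil G K c y ≤ c x :=
  (Finset.fold_min_le _).2 (.inr ⟨x, mem_lowerCovers.2 h, le_rfl⟩)

lemma ceil_le_bound {K : ℕ} (c : pos → ℕ) (x : pos) : ceil G K c x ≤ K :=
  (Finset.fold_min_le _).2 (.inl le_rfl)

lemma ceil_eq_min {K k : ℕ} (hK : K ≤ k) (c : pos → ℕ) (x : pos) :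
    ceil G K c x = min K (ceil G k c x) :=
  eq_of_forall_le_iff fun a => by
    simp only [ceil, le_min_iff, Finset.le_fold_min]
    exact ⟨fun h => ⟨h.1, h.1.trans hK, h.2⟩, fun h => ⟨h.1, h.2.2⟩⟩

lemma ceil_eq_bound {c : pos → ℕ} {x : pos} (h : ∀ y, Covers G y x → k ≤ c y) :
    ceil G k c x = k :=
  (ceil_le_bound c x).antisymm <|
    (Finset.le_fold_min _).2 ⟨le_rfl, fun y hy => h y (mem_lowerCovers.1 hy)⟩

lemma ceil_eq_bound_of_minimal {K : ℕ} {c : pos → ℕ} {x₀ : pos}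
    (hmin : ∀ y : pos, c y ≤ K → x₀.1.2 ≤ y.1.2) : ceil G (K + 1) c x₀ = K + 1 := by
  refine ceil_eq_bound fun y hy => ?_
  by_contra hlt
  have hrank := hmin y (by omega)
  exact absurd hy.2 (by omega)

lemma floor_congr {c c' : pos → ℕ} {x : pos} (h : ∀ y, Covers G x y → c y = c' y) :
    floor G c x = floor G c' x :=
  Finset.sup_congr rfl fun y hy => h y (mem_upperCovers.1 hy)

lemma ceil_congr {K : ℕ} {c c' : pos → ℕ} {x : pos} (h : ∀ y, Covers G y x → c y = c' y) :
    ceil G K c x = ceil G K c' x :=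
  Finset.fold_congr fun y hy => h y (mem_lowerCovers.1 hy)

lemma Elt.floor_le (t : Labeling G pos k) (x : pos) : floor G t.1 x ≤ t.1 x :=
  Finset.sup_le fun _ hy => t.le_of_covers (mem_upperCovers.1 hy)

lemma Elt.le_ceil (t : Labeling G pos k) {K : ℕ} {x : pos} (h : t.1 x ≤ K) :
    t.1 x ≤ ceil G K t.1 x :=
  (Finset.le_fold_min _).2 ⟨h, fun _ hy => t.le_of_covers (mem_lowerCovers.1 hy)⟩

/-- Two functions on the positions agree off color `i`. -/
def AgreeOff (i : N) (c c' : pos → ℕ) : Prop := ∀ x : pos, x.1.1 ≠ i → c x = c' x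

lemma AgreeOff.symm {i : N} {c c' : pos → ℕ} (h : AgreeOff i c c') : AgreeOff i c' c :=
  fun x hx => (h x hx).symm

lemma AgreeOff.floor_eq {i : N} {c c' : pos → ℕ} (h : AgreeOff i c c') {x : pos}
    (hx : x.1.1 = i) : floor G c x = floor G c' x :=
  floor_congr fun y hy => h y (hx ▸ hy.color_ne.symm)

lemma AgreeOff.ceil_eq {K : ℕ} {i : N} {c c' : pos → ℕ} (h : AgreeOff i c c') {x : pos}
    (hx : x.1.1 = i) : ceil G K c x = ceil G K c' x :=
  ceil_congr fun y hy => h y (hx ▸ hy.color_ne)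

/-- The labeling obtained from `t` by changing its values in color `i`, where each of them may
move freely between `floor` and `ceil`, since covering positions have different colors. -/
def Elt.adjust (t : Labeling G pos k) (i : N) (c : pos → ℕ) (hoff : AgreeOff i c t.1)
    (hon : ∀ x : pos, x.1.1 = i → floor G t.1 x ≤ c x ∧ c x ≤ ceil G k t.1 x) :
    Labeling G pos k :=
  .ofCovers c
    (fun x => by
      by_cases hx : x.1.1 = i
      · exact (hon x hx).2.trans (ceil_le_bound _ _)
      · exact hoff x hx ▸ t.2.1 x)
    (fun x y hxy => by
      by_cases hx : x.1.1 = i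
      · rw [hoff y (hx ▸ hxy.color_ne.symm)]
        exact (le_floor hxy).trans (hon x hx).1
      · rw [hoff x hx]
        by_cases hy : y.1.1 = i
        · exact (hon y hy).2.trans (ceil_le hxy)
        · exact hoff y hy ▸ t.le_of_covers hxy)

end Labelings

section Components

variable {N : Type} {G : SimpleGraph N} {pos : Finset (N × ℕ)} {k : ℕ}

lemma agreeOff_of_edge {i : N} {s t : Labeling G pos k} (h : edge i s t) :
    AgreeOff i s.1 t.1 := by
  obtain ⟨x, hx, -, hst⟩ := h
  exact fun y hy => (hst y (by rintro rfl; exact hy hx)).symm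

lemma agreeOff_of_mem_comp {i : N} {s t : Labeling G pos k} (h : s ∈ comp i t) :
    AgreeOff i t.1 s.1 := by
  replace h : Relation.ReflTransGen (fun a b => edge i a b ∨ edge i b a) t s := h
  induction h with
  | refl => exact fun _ _ => rfl
  | tail _ h ih =>
    intro x hx
    rw [ih x hx]
    rcases h with h | h
    · exact agreeOff_of_edge h x hx
    · exact (agreeOff_of_edge h x hx).symm

lemma mem_comp_symm {i : N} {s t : Labeling G pos k} (h : s ∈ comp i t) : t ∈ comp i s :=
  Relation.reflTransGen_swap.1 (Relation.ReflTransGen.mono (fun _ _ => Or.symm) _ _ h)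

lemma exists_edge_of_lt {i : N} {s t : Labeling G pos k} (h : AgreeOff i s.1 t.1) {x : pos}
    (hx : s.1 x < t.1 x) :
    ∃ s' : Labeling G pos k,
      edge i s s' ∧ s'.1 x = s.1 x + 1 ∧ ∀ y ≠ x, s'.1 y = s.1 y := by
  classical
  have hxi : x.1.1 = i := by
    by_contra hne
    exact hx.ne (h x hne)
  have hself : Function.update s.1 x (s.1 x + 1) x = s.1 x + 1 := Function.update_self ..
  have hne : ∀ y ≠ x, Function.update s.1 x (s.1 x + 1) y = s.1 y :=
    fun y hy => Function.update_of_ne hy _ _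
  refine ⟨s.adjust i (Function.update s.1 x (s.1 x + 1))
    (fun y hy => hne y (by rintro rfl; exact hy hxi)) (fun y hy => ?_),
    ⟨x, hxi, hself, hne⟩, hself, hne⟩
  have hfloor := s.floor_le y
  rcases eq_or_ne y x with rfl | hyx
  · have hceil := t.le_ceil (t.2.1 y)
    rw [← h.ceil_eq hy] at hceil
    omega
  · rw [hne y hyx]
    exact ⟨hfloor, s.le_ceil (s.2.1 y)⟩

lemma mem_comp_of_agreeOff {i : N} {s t : Labeling G pos k} (h : AgreeOff i t.1 s.1) :
    s ∈ comp i t := by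
  induction hn : ∑ x, Nat.dist (t.1 x) (s.1 x) using Nat.strong_induction_on
    generalizing s t with
  | _ n ih =>
  subst hn
  by_cases heq : ∀ x, t.1 x = s.1 x
  · rw [Subtype.ext (funext heq) (a1 := t) (a2 := s)]
    exact .refl
  push Not at heq
  obtain ⟨x, hx⟩ := heq
  wlog hlt : t.1 x < s.1 x generalizing s t
  · refine mem_comp_symm (this h.symm (fun m hm s' t' h' hm' => ?_) hx.symm (by omega))
    exact ih m (by simpa only [Nat.dist_comm] using hm) h' hm'
  obtain ⟨t', hedge, hx', hne⟩ := exists_edge_of_lt h hlt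
  refine .head (.inl hedge) (ih _ ?_ (fun y hy => ?_) rfl)
  · refine Finset.sum_lt_sum (fun y _ => ?_) ⟨x, Finset.mem_univ x, ?_⟩
    · rcases eq_or_ne y x with rfl | hyx
      · rw [hx', Nat.dist, Nat.dist]
        omega
      · rw [hne y hyx]
    · rw [hx', Nat.dist, Nat.dist]
      omega
  · rw [← h y hy, agreeOff_of_edge hedge y hy]

lemma mem_comp_iff {i : N} {s t : Labeling G pos k} : s ∈ comp i t ↔ AgreeOff i t.1 s.1 :=
  ⟨agreeOff_of_mem_comp, mem_comp_of_agreeOff⟩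

lemma rk_of_edge {i : N} {s t : Labeling G pos k} (hst : edge i s t) : rk t = rk s + 1 := by
  classical
  obtain ⟨x, -, hx, hne⟩ := hst
  rw [rk, rk, ← Finset.add_sum_erase _ _ (Finset.mem_attach _ x),
    ← Finset.add_sum_erase _ s.1 (Finset.mem_attach _ x), hx,
    Finset.sum_congr rfl fun y hy => hne y (Finset.ne_of_mem_erase hy)]
  ring

lemma mwt_of_edge_self {i : N} {s t : Labeling G pos k} (hst : edge i s t) :
    mwt i t = mwt i s + 2 := by
  have hoff := agreeOff_of_edge hst
  have hcomp : comp i t = comp i s := by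
    ext u
    rw [mem_comp_iff, mem_comp_iff]
    exact forall₂_congr fun x hx => by rw [hoff x hx]
  rw [mwt, mwt, hcomp, rk_of_edge hst]
  push_cast
  ring

variable [DecidableEq N] [DecidableRel G.Adj]

/-- The labeling of least rank in the component of `t` for color `i`. -/
def Elt.lowest (i : N) (t : Labeling G pos k) : Labeling G pos k :=
  t.adjust i (fun x => if x.1.1 = i then floor G t.1 x else t.1 x) (fun _ hx => if_neg hx)
    fun x hx => by
      rw [if_pos hx]
      exact ⟨le_rfl, (t.floor_le x).trans (t.le_ceil (t.2.1 x))⟩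

/-- The labeling of greatest rank in the component of `t` for color `i`. -/
def Elt.highest (i : N) (t : Labeling G pos k) : Labeling G pos k :=
  t.adjust i (fun x => if x.1.1 = i then ceil G k t.1 x else t.1 x) (fun _ hx => if_neg hx)
    fun x hx => by
      rw [if_pos hx]
      exact ⟨(t.floor_le x).trans (t.le_ceil (t.2.1 x)), le_rfl⟩

lemma sInf_rk_comp (i : N) (t : Labeling G pos k) :
    sInf (rk '' comp i t) = rk (t.lowest i) := by
  refine IsLeast.csInf_eq ⟨⟨_, mem_comp_iff.2 fun x hx => (if_neg hx).symm, rfl⟩, ?_⟩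
  rintro _ ⟨s, hs, rfl⟩
  have hts := mem_comp_iff.1 hs
  refine Finset.sum_le_sum fun x _ => ?_
  change (if x.1.1 = i then floor G t.1 x else t.1 x) ≤ s.1 x
  split_ifs with hx
  · rw [hts.floor_eq hx]
    exact s.floor_le x
  · exact (hts x hx).le

lemma sSup_rk_comp (i : N) (t : Labeling G pos k) :
    sSup (rk '' comp i t) = rk (t.highest i) := by
  refine IsGreatest.csSup_eq ⟨⟨_, mem_comp_iff.2 fun x hx => (if_neg hx).symm, rfl⟩, ?_⟩
  rintro _ ⟨s, hs, rfl⟩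
  have hts := mem_comp_iff.1 hs
  refine Finset.sum_le_sum fun x _ => ?_
  change s.1 x ≤ if x.1.1 = i then ceil G k t.1 x else t.1 x
  split_ifs with hx
  · rw [hts.ceil_eq hx]
    exact s.le_ceil (s.2.1 x)
  · exact (hts x hx).ge

lemma mwt_eq_sum (i : N) (t : Labeling G pos k) :
    mwt i t = ∑ x : pos,
      if x.1.1 = i then 2 * (t.1 x : ℤ) - floor G t.1 x - ceil G k t.1 x else 0 := by
  have hlow : rk (t.lowest i) = ∑ x : pos, if x.1.1 = i then floor G t.1 x else t.1 x := rfl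
  have hhigh : rk (t.highest i) = ∑ x : pos, if x.1.1 = i then ceil G k t.1 x else t.1 x := rfl
  have hrk : rk t = ∑ x : pos, t.1 x := rfl
  rw [mwt, sInf_rk_comp, sSup_rk_comp, hlow, hhigh, hrk]
  push_cast
  rw [← Finset.sum_sub_distrib, ← Finset.sum_sub_distrib, ← Finset.sum_sub_distrib]
  refine Finset.sum_congr rfl fun x _ => ?_
  split_ifs <;> ring

end Components

/-! ### Minuscule colorings -/

section Minuscule

variable {N : Type} [DecidableEq N] {G : SimpleGraph N} [DecidableRel G.Adj]
  {pos : Finset (N × ℕ)} {k : ℕ}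

/-- The Cartan matrix of the simply laced Dynkin diagram `G`. -/
def cartan (G : SimpleGraph N) [DecidableRel G.Adj] (i j : N) : ℤ :=
  if i = j then 2 else if G.Adj i j then -1 else 0

lemma cartan_self (i : N) : cartan G i i = 2 := if_pos rfl

/-- The position `x` is the only upper cover of the last position `y` of color `j`, or the only
lower cover of the first one `z`, or one of the exactly two elements between consecutive positions
`y`, `z` of color `j`; this makes the weight of color `j` drop by one when a value at `x` is
raised by one. -/
def BalancedAt (G : SimpleGraph N) [DecidableRel G.Adj] (x : pos) (j : N) : Prop :=
  (∃ y : pos, y.1.1 = j ∧ upperCovers G y = {x} ∧ ∀ z : pos, z.1.1 = j → ¬ Covers G x z) ∨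
  (∃ z : pos, z.1.1 = j ∧ lowerCovers G z = {x} ∧ ∀ y : pos, y.1.1 = j → ¬ Covers G y x) ∨
  (∃ y : pos, y.1.1 = j ∧ ∃ z : pos, z.1.1 = j ∧ ∃ x' ≠ x,
    upperCovers G y = {x, x'} ∧ lowerCovers G z = {x, x'})

instance (x : pos) (j : N) : Decidable (BalancedAt G x j) :=
  @instDecidableOr _ _ inferInstance (@instDecidableOr _ _ inferInstance inferInstance)

/-- Minuscule colored posets, described by local conditions: each color class is a chain, and each
position is balanced with respect to the adjacent colors. -/
structure IsMinuscule (G : SimpleGraph N) [DecidableRel G.Adj] (pos : Finset (N × ℕ)) : Prop where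
  comparable : ∀ x y : pos, x.1.1 = y.1.1 → ple G.Adj pos x y ∨ ple G.Adj pos y x
  balanced : ∀ (x : pos) (j : N), G.Adj x.1.1 j → BalancedAt G x j

/-- The weight `(m_i(t))_i` of a labeling `t`. -/
def wt (t : Labeling G pos k) (i : N) : ℤ := mwt i t

lemma sum_floor_sub {c c' : pos → ℕ} {x y : pos} (hc : ∀ z ≠ x, c z = c' z)
    (hy : Covers G y x) :
    ∑ z : pos with z.1.1 = y.1.1, ((floor G c z : ℤ) - floor G c' z) =
      floor G c y - floor G c' y := by
  refine Finset.sum_eq_single y (fun z hz hne => sub_eq_zero.2 ?_) (by simp)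
  refine congrArg _ (floor_congr fun u hu => hc u ?_)
  rintro rfl
  have hrank : z.1.2 = y.1.2 := by have := hu.2; have := hy.2; omega
  exact hne (Subtype.ext (Prod.ext (Finset.mem_filter.1 hz).2 hrank))

lemma sum_ceil_sub {c c' : pos → ℕ} {x y : pos} (hc : ∀ z ≠ x, c z = c' z)
    (hy : Covers G x y) :
    ∑ z : pos with z.1.1 = y.1.1, ((ceil G k c z : ℤ) - ceil G k c' z) =
      ceil G k c y - ceil G k c' y := by
  refine Finset.sum_eq_single y (fun z hz hne => sub_eq_zero.2 ?_) (by simp)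
  refine congrArg _ (ceil_congr fun u hu => hc u ?_)
  rintro rfl
  exact hne (Subtype.ext (Prod.ext (Finset.mem_filter.1 hz).2 (hu.2.trans hy.2.symm)))

lemma sum_floor_sub_eq_zero {c c' : pos → ℕ} {x : pos} {j : N} (hc : ∀ z ≠ x, c z = c' z)
    (hj : ∀ z : pos, z.1.1 = j → ¬ Covers G z x) :
    ∑ z : pos with z.1.1 = j, ((floor G c z : ℤ) - floor G c' z) = 0 := by
  refine Finset.sum_eq_zero fun z hz => sub_eq_zero.2 (congrArg _ (floor_congr fun u hu => hc u ?_))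
  rintro rfl
  exact hj z (Finset.mem_filter.1 hz).2 hu

lemma sum_ceil_sub_eq_zero {c c' : pos → ℕ} {x : pos} {j : N} (hc : ∀ z ≠ x, c z = c' z)
    (hj : ∀ z : pos, z.1.1 = j → ¬ Covers G x z) :
    ∑ z : pos with z.1.1 = j, ((ceil G k c z : ℤ) - ceil G k c' z) = 0 := by
  refine Finset.sum_eq_zero fun z hz => sub_eq_zero.2 (congrArg _ (ceil_congr fun u hu => hc u ?_))
  rintro rfl
  exact hj z (Finset.mem_filter.1 hz).2 hu

/-- The elements `x`, `x'` between two consecutive positions of a color contribute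
`max + min = sum`, which is why the weight depends linearly on the labeling. -/
lemma IsMinuscule.sum_floor_ceil_sub (h : IsMinuscule G pos) {s t : Labeling G pos k} {x : pos}
    (hx : t.1 x = s.1 x + 1) (hst : ∀ y ≠ x, t.1 y = s.1 y) {j : N} (hj : G.Adj x.1.1 j) :
    ∑ z : pos with z.1.1 = j, ((floor G t.1 z : ℤ) - floor G s.1 z) +
      ∑ z : pos with z.1.1 = j, ((ceil G k t.1 z : ℤ) - ceil G k s.1 z) = 1 := by
  have ht := t.2.1 x
  rcases h.balanced x j hj with ⟨y, rfl, hup, hz⟩ | ⟨z, rfl, hlow, hy⟩ |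
    ⟨y, rfl, z, hz, x', hne, hup, hlow⟩
  · have hyx : Covers G y x := mem_upperCovers.1 (by simp [hup])
    rw [sum_ceil_sub_eq_zero hst hz, sum_floor_sub hst hyx]
    simp only [floor, hup, Finset.sup_singleton]
    omega
  · have hxz : Covers G x z := mem_lowerCovers.1 (by simp [hlow])
    rw [sum_floor_sub_eq_zero hst hy, sum_ceil_sub hst hxz]
    simp only [ceil, hlow, Finset.fold_singleton]
    omega
  · have hyx : Covers G y x := mem_upperCovers.1 (by simp [hup])
    have hxz : Covers G x z := mem_lowerCovers.1 (by simp [hlow])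
    have hx' := hst x' hne
    have ht' := t.2.1 x'
    rw [sum_floor_sub hst hyx, ← hz, sum_ceil_sub hst hxz]
    simp only [floor, ceil, hup, hlow, Finset.sup_insert, Finset.sup_singleton,
      Finset.fold_insert_idem, Finset.fold_singleton]
    omega

lemma mwt_sub_mwt_of_edge {i j : N} (hij : j ≠ i) {s t : Labeling G pos k} (hst : edge i s t) :
    mwt j t - mwt j s =
      - (∑ z : pos with z.1.1 = j, ((floor G t.1 z : ℤ) - floor G s.1 z) +
        ∑ z : pos with z.1.1 = j, ((ceil G k t.1 z : ℤ) - ceil G k s.1 z)) := by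
  rw [mwt_eq_sum, mwt_eq_sum, ← Finset.sum_filter, ← Finset.sum_filter,
    ← Finset.sum_sub_distrib, ← Finset.sum_add_distrib, ← Finset.sum_neg_distrib]
  refine Finset.sum_congr rfl fun z hz => ?_
  rw [agreeOff_of_edge hst z ((Finset.mem_filter.1 hz).2 ▸ hij)]
  ring

lemma IsMinuscule.wt_of_edge (h : IsMinuscule G pos) {i : N} {s t : Labeling G pos k}
    (hst : edge i s t) : wt t = wt s + cartan G i := by
  funext j
  rcases eq_or_ne i j with rfl | hij
  · simpa [cartan, wt] using mwt_of_edge_self hst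
  have hsub := mwt_sub_mwt_of_edge hij.symm hst
  obtain ⟨x, rfl, hx, hne⟩ := hst
  by_cases hadj : G.Adj x.1.1 j
  · rw [h.sum_floor_ceil_sub hx hne hadj] at hsub
    simp only [wt, cartan, Pi.add_apply, if_neg hij, if_pos hadj]
    omega
  · rw [sum_floor_sub_eq_zero hne (fun z hz hc => hadj (by rw [← hz]; exact hc.1.symm)),
      sum_ceil_sub_eq_zero hne (fun z hz hc => hadj (by rw [← hz]; exact hc.1))] at hsub
    simp only [wt, cartan, Pi.add_apply, if_neg hij, if_neg hadj]
    omega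

lemma IsMinuscule.wt_of_agreeOff (h : IsMinuscule G pos) {i : N} {s t : Labeling G pos k}
    (hst : AgreeOff i s.1 t.1) : wt t = wt s + ((rk t : ℤ) - rk s) • cartan G i := by
  have hcomp : Relation.ReflTransGen (fun a b => edge i a b ∨ edge i b a) s t :=
    mem_comp_of_agreeOff hst
  clear hst
  induction hcomp with
  | refl => simp
  | tail _ hedge ih =>
    rcases hedge with hedge | hedge
    · rw [h.wt_of_edge hedge, ih, rk_of_edge hedge]
      push_cast
      module
    · rw [h.wt_of_edge hedge, rk_of_edge hedge] at ih
      rw [← sub_eq_iff_eq_add.2 ih]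
      push_cast
      module

end Minuscule

/-! ### Alternants -/

section Alternants

variable {N : Type} [DecidableEq N] [Fintype N] {A : N → N → ℤ}

lemma refl_mulVec (A : N → N → ℤ) (i : N) (μ : N → ℤ) :
    (refl A i).mulVec μ = μ - μ i • A i := by
  funext j
  simp [refl, Matrix.mulVec, dotProduct, sub_mul, Finset.sum_sub_distrib, mul_comm (μ i)]

lemma refl_mem_weyl (A : N → N → ℤ) (i : N) : refl A i ∈ weyl A :=
  Submonoid.subset_closure ⟨i, rfl⟩

lemma refl_mul_self {i : N} (hA : A i i = 2) : refl A i * refl A i = 1 := by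
  refine Matrix.mulVec_injective (funext fun μ => ?_)
  rw [← Matrix.mulVec_mulVec, refl_mulVec, refl_mulVec, Matrix.one_mulVec]
  simp only [Pi.sub_apply, Pi.smul_apply, hA, smul_eq_mul]
  module

lemma det_refl {i : N} (hA : A i i = 2) : (refl A i).det = -1 := by
  have hrank : refl A i = 1 + Matrix.replicateCol Unit (-A i) *
      Matrix.replicateRow Unit (Pi.single i (1 : ℤ)) := by
    ext j l
    simp only [refl, Matrix.add_apply, Matrix.one_apply, Matrix.mul_apply,
      Matrix.replicateCol_apply, Matrix.replicateRow_apply, Pi.neg_apply, Pi.single_apply,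
      Finset.univ_unique, Finset.sum_singleton]
    split_ifs <;> ring
  rw [hrank, Matrix.det_one_add_replicateCol_mul_replicateRow, single_dotProduct, Pi.neg_apply, hA]
  norm_num

lemma alt_eq_sum (hW : (weyl A : Set (Matrix N N ℤ)).Finite) (ν : N → ℤ) :
    alt A ν = ∑ w ∈ hW.toFinset, .single (w.mulVec ν) w.det :=
  finsum_mem_eq_finite_toFinset_sum _ hW

lemma alt_refl_mulVec (hW : (weyl A : Set (Matrix N N ℤ)).Finite) {i : N} (hA : A i i = 2)
    (ν : N → ℤ) : alt A ((refl A i).mulVec ν) = -alt A ν := by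
  have hmem : ∀ w ∈ hW.toFinset, w * refl A i ∈ hW.toFinset := fun w hw =>
    hW.mem_toFinset.2 (mul_mem (hW.mem_toFinset.1 hw) (refl_mem_weyl A i))
  have hinv : ∀ w ∈ hW.toFinset, w * refl A i * refl A i = w := fun w _ => by
    rw [mul_assoc, refl_mul_self hA, mul_one]
  rw [alt_eq_sum hW, alt_eq_sum hW, ← Finset.sum_neg_distrib]
  refine Finset.sum_nbij' (· * refl A i) (· * refl A i) hmem hmem hinv hinv fun w _ => ?_
  rw [Matrix.mulVec_mulVec, Matrix.det_mul, det_refl hA, mul_neg_one, AddMonoidAlgebra.single_neg,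
    neg_neg]

variable {T : Type} {φ : T → N → ℤ}

lemma exists_equiv_weyl
    (hφ : ∀ i, ∃ e : T ≃ T, ∀ t, φ (e t) = (refl A i).mulVec (φ t))
    {w : Matrix N N ℤ} (hw : w ∈ weyl A) :
    ∃ e : T ≃ T, ∀ t, φ (e t) = w.mulVec (φ t) := by
  induction hw using Submonoid.closure_induction with
  | mem w hw =>
    obtain ⟨i, rfl⟩ := hw
    exact hφ i
  | one => exact ⟨.refl T, fun t => (Matrix.one_mulVec _).symm⟩
  | mul v w _ _ hv hw =>
    obtain ⟨e, he⟩ := hv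
    obtain ⟨f, hf⟩ := hw
    exact ⟨f.trans e, fun t => by rw [Equiv.trans_apply, he, hf, Matrix.mulVec_mulVec]⟩

lemma alt_mul_sum [Fintype T] (hW : (weyl A : Set (Matrix N N ℤ)).Finite)
    (hφ : ∀ i, ∃ e : T ≃ T, ∀ t, φ (e t) = (refl A i).mulVec (φ t)) (ν : N → ℤ) :
    alt A ν * ∑ t, .single (φ t) 1 = ∑ t, alt A (ν + φ t) := by
  simp only [alt_eq_sum hW]
  rw [Finset.sum_mul, Finset.sum_comm]
  refine Finset.sum_congr rfl fun w hw => ?_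
  obtain ⟨e, he⟩ := exists_equiv_weyl hφ (hW.mem_toFinset.1 hw)
  rw [← e.sum_comp, Finset.mul_sum]
  refine Finset.sum_congr rfl fun t _ => ?_
  rw [he, AddMonoidAlgebra.single_mul_single, mul_one, Matrix.mulVec_add]

lemma sum_alt_eq_zero (hW : (weyl A : Set (Matrix N N ℤ)).Finite) {i : N} (hA : A i i = 2)
    (s : Finset T) (σ : T → T) (hσ : ∀ t ∈ s, σ t ∈ s) (hσσ : ∀ t ∈ s, σ (σ t) = t)
    (hφ : ∀ t ∈ s, φ (σ t) = (refl A i).mulVec (φ t)) :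
    ∑ t ∈ s, alt A (φ t) = 0 := by
  have hneg : ∑ t ∈ s, alt A (φ t) = -∑ t ∈ s, alt A (φ t) := by
    rw [← Finset.sum_neg_distrib]
    refine Finset.sum_nbij' σ σ hσ hσ hσσ hσσ fun t ht => ?_
    rw [hφ t ht, alt_refl_mulVec hW hA, neg_neg]
  ext μ
  have hcoeff := congrArg (AddMonoidAlgebra.coeff · μ) hneg
  simp only [AddMonoidAlgebra.coeff_neg, Finsupp.neg_apply] at hcoeff
  rw [AddMonoidAlgebra.coeff_zero, Finsupp.zero_apply]
  omega

end Alternants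

/-! ### Reflecting the values in one color -/

section Top

variable {N : Type} {G : SimpleGraph N} {pos : Finset (N × ℕ)} {k : ℕ}

/-- The constant labeling `k`, which is the greatest one. -/
def Elt.top (G : SimpleGraph N) (pos : Finset (N × ℕ)) (k : ℕ) : Labeling G pos k :=
  .ofCovers (fun _ => k) (fun _ => le_rfl) fun _ _ _ => le_rfl

lemma Elt.eq_top_iff {t : Labeling G pos k} :
    t = .top G pos k ↔ ({x | t.1 x < k} : Finset pos) = ∅ := by
  rw [Finset.filter_eq_empty_iff]
  refine ⟨?_, fun h => Subtype.ext (funext fun x => ?_)⟩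
  · rintro rfl x _
    exact lt_irrefl k
  · exact (t.2.1 x).antisymm (not_lt.1 (h (Finset.mem_univ x)))

variable [DecidableEq N] [DecidableRel G.Adj]

/-- The number of maximal positions of color `i`. -/
def maximalCount (G : SimpleGraph N) [DecidableRel G.Adj] (pos : Finset (N × ℕ)) (i : N) : ℕ :=
  Finset.card {x : pos | x.1.1 = i ∧ upperCovers G x = ∅}

lemma wt_top (i : N) : wt (.top G pos k) i = k * maximalCount G pos i := by
  rw [wt, mwt_eq_sum, maximalCount, Finset.card_filter, Nat.cast_sum, Finset.mul_sum]
  refine Finset.sum_congr rfl fun x _ => ?_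
  have hceil : ceil G k (Elt.top G pos k).1 x = k := ceil_eq_bound fun _ _ => le_rfl
  have htop : (Elt.top G pos k).1 x = k := rfl
  rw [hceil, htop]
  by_cases hx : upperCovers G x = ∅
  · have hfloor : floor G (Elt.top G pos k).1 x = 0 := by simp [floor, hx]
    simp only [hfloor, hx, and_true]
    split_ifs <;> push_cast <;> ring
  · have hfloor : floor G (Elt.top G pos k).1 x = k :=
      Finset.sup_const (Finset.nonempty_iff_ne_empty.2 hx) k
    simp only [hfloor, hx, and_false, if_false, Nat.cast_zero, mul_zero]
    split_ifs <;> ring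

end Top

section Flip

variable {N : Type} [DecidableEq N] {G : SimpleGraph N} [DecidableRel G.Adj]
  {pos : Finset (N × ℕ)} {k K : ℕ}

/-- The labeling obtained from `t` by reflecting each value of color `i` in the interval of
admissible values up to the cap `K`; the values above `K` stay. -/
def Elt.flip (i : N) (hK : K ≤ k) (t : Labeling G pos k) : Labeling G pos k :=
  t.adjust i
    (fun x => if x.1.1 = i ∧ t.1 x ≤ K then floor G t.1 x + ceil G K t.1 x - t.1 x else t.1 x)
    (fun _ hx => if_neg fun h => hx h.1)
    fun x _ => by
      have hfloor := t.floor_le x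
      have hceil := t.le_ceil (t.2.1 x)
      have hmin := ceil_eq_min (G := G) hK t.1 x
      split_ifs <;> omega

lemma Elt.flip_apply (i : N) (hK : K ≤ k) (t : Labeling G pos k) (x : pos) :
    (t.flip i hK).1 x =
      if x.1.1 = i ∧ t.1 x ≤ K then floor G t.1 x + ceil G K t.1 x - t.1 x else t.1 x :=
  rfl

lemma Elt.agreeOff_flip (i : N) (hK : K ≤ k) (t : Labeling G pos k) :
    AgreeOff i t.1 (t.flip i hK).1 :=
  fun _ hx => (if_neg fun h => hx h.1).symm

lemma Elt.flip_le_iff (i : N) (hK : K ≤ k) (t : Labeling G pos k) (x : pos) :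
    (t.flip i hK).1 x ≤ K ↔ t.1 x ≤ K := by
  rw [flip_apply]
  split_ifs with h
  · have hfloor := t.floor_le x
    have hceil := ceil_le_bound (G := G) (K := K) t.1 x
    omega
  · rfl

lemma Elt.flip_flip (i : N) (hK : K ≤ k) (t : Labeling G pos k) :
    (t.flip i hK).flip i hK = t := by
  refine Subtype.ext (funext fun x => ?_)
  rw [flip_apply]
  simp only [flip_le_iff]
  split_ifs with h
  · rw [← (t.agreeOff_flip i hK).floor_eq h.1, ← (t.agreeOff_flip i hK).ceil_eq h.1, flip_apply,
      if_pos h]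
    have hfloor := t.floor_le x
    have hceil := t.le_ceil h.2
    omega
  · rw [flip_apply, if_neg h]

lemma Elt.rk_flip_sub_rk (i : N) (hK : K ≤ k) (t : Labeling G pos k) :
    (rk (t.flip i hK) : ℤ) - rk t = ∑ x : pos,
      if x.1.1 = i ∧ t.1 x ≤ K then (floor G t.1 x : ℤ) + ceil G K t.1 x - 2 * t.1 x else 0 := by
  rw [rk, rk, Nat.cast_sum, Nat.cast_sum, ← Finset.sum_sub_distrib]
  refine Finset.sum_congr rfl fun x _ => ?_
  rw [flip_apply]
  split_ifs with h
  · have hceil := t.le_ceil h.2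
    omega
  · exact sub_self _

lemma Elt.rk_flip_self (i : N) (t : Labeling G pos k) :
    (rk (t.flip i le_rfl) : ℤ) - rk t = -mwt i t := by
  rw [t.rk_flip_sub_rk, mwt_eq_sum, ← Finset.sum_neg_distrib]
  refine Finset.sum_congr rfl fun x _ => ?_
  simp only [t.2.1 x, and_true]
  split_ifs <;> ring

lemma IsMinuscule.floor_eq_of_lt (h : IsMinuscule G pos) {t : Labeling G pos (K + 1)} {x₀ x : pos}
    (hx₀ : t.1 x₀ ≤ K) (hmin : ∀ y : pos, t.1 y ≤ K → x₀.1.2 ≤ y.1.2)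
    (hcolor : x.1.1 = x₀.1.1) (hx : K < t.1 x) : floor G t.1 x = K + 1 := by
  have hne : x.1 ≠ x₀.1 := fun heq => by
    rw [Subtype.ext heq] at hx
    omega
  have hple : ple G.Adj pos x.1 x₀.1 := (h.comparable x x₀ hcolor).resolve_right fun hle =>
    absurd (t.2.2.1 x x₀ hle) (by omega)
  obtain heq | ⟨z, hxz, hz⟩ := hple.cases_head
  · exact absurd heq hne
  have hcover : Covers G x ⟨z, hxz.2.1⟩ := hxz.2.2
  have hzx₀ : z ≠ x₀.1 := fun heq => hcover.color_ne (heq ▸ hcolor)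
  have htz : K < t.1 ⟨z, hxz.2.1⟩ := by
    by_contra hle
    have hrank := hmin ⟨z, hxz.2.1⟩ (by omega)
    exact (rank_lt_of_ple hz hzx₀).not_ge hrank
  have hfloor := le_floor (c := t.1) hcover
  have hle := t.floor_le x
  have hbound := t.2.1 x
  omega

lemma IsMinuscule.ceil_le_of_ne (h : IsMinuscule G pos) {t : Labeling G pos k} {x₀ x : pos}
    (hx₀ : t.1 x₀ ≤ K) (hmin : ∀ y : pos, t.1 y ≤ K → x₀.1.2 ≤ y.1.2)
    (hcolor : x.1.1 = x₀.1.1) (hx : t.1 x ≤ K) (hne : x ≠ x₀) : ceil G k t.1 x ≤ K := by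
  have hple : ple G.Adj pos x₀.1 x.1 := (h.comparable x x₀ hcolor).resolve_left fun hle =>
    (rank_lt_of_ple hle (Subtype.coe_ne_coe.2 hne)).not_ge (hmin x hx)
  obtain heq | ⟨z, hz, hzx⟩ := hple.cases_tail
  · exact absurd (Subtype.ext heq) hne
  have hcover : Covers G ⟨z, hzx.1⟩ x := hzx.2.2
  exact (ceil_le hcover).trans ((t.2.2.1 ⟨z, hzx.1⟩ x₀ hz).trans hx₀)

/-- Lowering the cap by one only matters at `x₀`, and there it lowers the top of the reflected
interval by one. -/
lemma IsMinuscule.rk_flip_succ (h : IsMinuscule G pos) {t : Labeling G pos (K + 1)} {x₀ : pos}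
    (hx₀ : t.1 x₀ ≤ K) (hmin : ∀ y : pos, t.1 y ≤ K → x₀.1.2 ≤ y.1.2) :
    (rk (t.flip x₀.1.1 (K.le_add_right 1)) : ℤ) - rk t = -(mwt x₀.1.1 t + 1) := by
  have hone : ∑ x : pos, (if x = x₀ then (1 : ℤ) else 0) = 1 := by simp
  rw [t.rk_flip_sub_rk, mwt_eq_sum, ← hone, ← Finset.sum_add_distrib, ← Finset.sum_neg_distrib]
  refine Finset.sum_congr rfl fun x _ => ?_
  by_cases hcolor : x.1.1 = x₀.1.1
  swap
  · have hne : x ≠ x₀ := by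
      rintro rfl
      exact hcolor rfl
    simp [hcolor, hne]
  have hceil := ceil_eq_min (G := G) (K.le_add_right 1) t.1 x
  by_cases hx : t.1 x ≤ K
  · rw [if_pos ⟨hcolor, hx⟩, if_pos hcolor]
    rcases eq_or_ne x x₀ with rfl | hne
    · rw [if_pos rfl]
      have htop := ceil_eq_bound_of_minimal (G := G) hmin
      omega
    · rw [if_neg hne]
      have hle := h.ceil_le_of_ne hx₀ hmin hcolor hx hne
      omega
  · have hne : x ≠ x₀ := by
      rintro rfl
      exact hx hx₀
    have hfloor := h.floor_eq_of_lt hx₀ hmin hcolor (not_le.1 hx)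
    have hbound := t.2.1 x
    have htop := t.le_ceil hbound
    have htop' := ceil_le_bound (G := G) (K := K + 1) t.1 x
    rw [if_neg fun h => hx h.2, if_pos hcolor, if_neg hne]
    omega

variable [Fintype N]

lemma IsMinuscule.wt_flip_self (h : IsMinuscule G pos) (i : N) (t : Labeling G pos k) :
    wt (t.flip i le_rfl) = (refl (cartan G) i).mulVec (wt t) := by
  rw [h.wt_of_agreeOff (t.agreeOff_flip i le_rfl), t.rk_flip_self, refl_mulVec, neg_smul,
    ← sub_eq_add_neg]
  rfl

lemma IsMinuscule.one_add_wt_flip_succ (h : IsMinuscule G pos) {t : Labeling G pos (K + 1)}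
    {x₀ : pos} (hx₀ : t.1 x₀ ≤ K) (hmin : ∀ y : pos, t.1 y ≤ K → x₀.1.2 ≤ y.1.2) :
    1 + wt (t.flip x₀.1.1 (K.le_add_right 1)) = (refl (cartan G) x₀.1.1).mulVec (1 + wt t) := by
  rw [h.wt_of_agreeOff (t.agreeOff_flip _ _), h.rk_flip_succ hx₀ hmin, refl_mulVec, Pi.add_apply,
    Pi.one_apply, wt]
  module

lemma IsMinuscule.sum_alt_fiber_eq_zero (h : IsMinuscule G pos)
    (hW : (weyl (cartan G) : Set (Matrix N N ℤ)).Finite) {D : Finset pos} (hD : D.Nonempty) :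
    ∑ t : Labeling G pos k with ({x | t.1 x < k} : Finset pos) = D,
      alt (cartan G) (1 + wt t) = 0 := by
  obtain ⟨x₀, hx₀, hmin⟩ := D.exists_min_image (fun x => x.1.2) hD
  rcases k with - | K
  · refine Finset.sum_eq_zero fun t ht => ?_
    simp [← (Finset.mem_filter.1 ht).2] at hx₀
  have hmem : ∀ {t : Labeling G pos (K + 1)}, ({x | t.1 x < K + 1} : Finset pos) = D →
      ∀ x, x ∈ D ↔ t.1 x ≤ K := by
    rintro t rfl x
    simp
  refine sum_alt_eq_zero hW (cartan_self (G := G) x₀.1.1) _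
    (Elt.flip x₀.1.1 (K.le_add_right 1)) (fun t ht => ?_) (fun t _ => t.flip_flip _ _)
    (fun t ht => ?_) <;>
    have ht := (Finset.mem_filter.1 ht).2
  · refine Finset.mem_filter.2 ⟨Finset.mem_univ _, ?_⟩
    ext x
    simp [Elt.flip_le_iff, hmem ht]
  · exact h.one_add_wt_flip_succ ((hmem ht x₀).1 hx₀) fun y hy => hmin y ((hmem ht y).2 hy)

lemma IsMinuscule.sum_alt_wt (h : IsMinuscule G pos)
    (hW : (weyl (cartan G) : Set (Matrix N N ℤ)).Finite) :
    ∑ t : Labeling G pos k, alt (cartan G) (1 + wt t) =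
      alt (cartan G) (1 + wt (.top G pos k)) := by
  rw [← Finset.sum_fiberwise _ fun t : Labeling G pos k => ({x | t.1 x < k} : Finset pos),
    Finset.sum_eq_single ∅
      (fun D _ hD => h.sum_alt_fiber_eq_zero hW (Finset.nonempty_iff_ne_empty.2 hD)) (by simp)]
  simp only [← Elt.eq_top_iff, Finset.filter_eq', Finset.mem_univ, if_true, Finset.sum_singleton]

end Flip

/-! ### Finiteness of the Weyl group -/

section Indicator

variable {N : Type} {G : SimpleGraph N} {pos : Finset (N × ℕ)}

/-- The indicator, as a labeling with values in `{0, 1}`, of an order ideal `D`. -/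
def Elt.indicator (D : pos → Prop) [DecidablePred D]
    (hD : ∀ x y : pos, Covers G x y → D y → D x) : Labeling G pos 1 :=
  .ofCovers (fun x => if D x then 1 else 0) (fun x => by split_ifs <;> omega)
    fun x y hxy => by
      have hxy := hD x y hxy
      split_ifs <;> first | omega | contradiction | tauto

lemma exists_edge (G : SimpleGraph N) (x : pos) : ∃ s t : Labeling G pos 1, edge x.1.1 s t := by
  classical
  refine ⟨.indicator (fun y => y.1.2 < x.1.2) fun y z hyz hz => ?_,
    .indicator (fun y => y.1.2 < x.1.2 ∨ y = x) fun y z hyz hz => ?_, x, rfl, ?_, fun y hy => ?_⟩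
  · have := hyz.2
    omega
  · have := hyz.2
    rcases hz with hz | rfl <;> omega
  · simp [Elt.indicator, Elt.ofCovers]
  · simp [Elt.indicator, Elt.ofCovers, hy]

end Indicator

section Finiteness

variable {N : Type} [DecidableEq N] [Fintype N] {G : SimpleGraph N} [DecidableRel G.Adj]
  {pos : Finset (N × ℕ)} {k : ℕ}

lemma IsMinuscule.exists_equiv_refl (h : IsMinuscule G pos) (i : N) :
    ∃ e : Labeling G pos k ≃ Labeling G pos k,
      ∀ t, wt (e t) = (refl (cartan G) i).mulVec (wt t) :=
  ⟨⟨Elt.flip i le_rfl, Elt.flip i le_rfl, Elt.flip_flip i le_rfl, Elt.flip_flip i le_rfl⟩,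
    h.wt_flip_self i⟩

/-- Differences of weights of these labelings include the rows of the Cartan matrix. -/
lemma IsMinuscule.eq_of_mulVec_wt_eq (h : IsMinuscule G pos) (hcolor : ∀ i, ∃ x : pos, x.1.1 = i)
    (hdet : (Matrix.of (cartan G)).det ≠ 0) {w w' : Matrix N N ℤ}
    (hw : ∀ t : Labeling G pos 1, w.mulVec (wt t) = w'.mulVec (wt t)) : w = w' := by
  have hrow : ∀ i, w.mulVec (cartan G i) = w'.mulVec (cartan G i) := fun i => by
    obtain ⟨x, rfl⟩ := hcolor i
    obtain ⟨s, t, hst⟩ := exists_edge G x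
    rw [← add_right_inj (w.mulVec (wt s)), ← Matrix.mulVec_add, ← h.wt_of_edge hst, hw t, hw s,
      h.wt_of_edge hst, Matrix.mulVec_add]
  rw [← sub_eq_zero]
  refine funext fun j => Matrix.eq_zero_of_mulVec_eq_zero hdet (funext fun i => ?_)
  rw [Matrix.mulVec, dotProduct_comm]
  change (w - w').mulVec (cartan G i) j = 0
  rw [Matrix.sub_mulVec, hrow i, sub_self, Pi.zero_apply]

lemma IsMinuscule.weyl_finite (h : IsMinuscule G pos) (hcolor : ∀ i, ∃ x : pos, x.1.1 = i)
    (hdet : (Matrix.of (cartan G)).det ≠ 0) :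
    (weyl (cartan G) : Set (Matrix N N ℤ)).Finite := by
  have hperm : ∀ w ∈ weyl (cartan G), ∃ e : Labeling G pos 1 ≃ Labeling G pos 1,
      ∀ t, wt (e t) = w.mulVec (wt t) := fun w hw =>
    exists_equiv_weyl h.exists_equiv_refl hw
  choose! e he using hperm
  refine Set.Finite.of_injOn (Set.mapsTo_univ e _) (fun w hw w' hw' heq => ?_) Set.finite_univ
  exact h.eq_of_mulVec_wt_eq hcolor hdet fun t => by rw [← he w hw, ← he w' hw', heq]

end Finiteness

end CL

/-! ### Weight generating functions -/

theorem statement_6_general {N : Type} [DecidableEq N] [Fintype N] {G : SimpleGraph N}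
    [DecidableRel G.Adj] {pos : Finset (N × ℕ)} (h : CL.IsMinuscule G pos)
    (hcolor : ∀ i, ∃ x : pos, x.1.1 = i) (hdet : (Matrix.of (CL.cartan G)).det ≠ 0) (k : ℕ) :
    (CL.weyl (CL.cartan G) : Set (Matrix N N ℤ)).Finite ∧
      CL.alt (CL.cartan G) (fun _ => 1) * CL.wgf G.Adj pos k (fun _ => True) =
        CL.alt (CL.cartan G) (fun j => k * CL.maximalCount G pos j + 1) := by
  have hW := h.weyl_finite hcolor hdet
  refine ⟨hW, (CL.alt_mul_sum hW h.exists_equiv_refl 1).trans ((h.sum_alt_wt hW).trans ?_)⟩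
  refine congrArg _ (funext fun j => ?_)
  rw [Pi.add_apply, Pi.one_apply, CL.wt_top, add_comm]

/-! ### Type `E₆` -/

/-- The `E₆` Dynkin diagram. -/
def dynkinE6 : SimpleGraph N6 where
  Adj := adj6
  symm := ⟨by decide⟩
  loopless := ⟨by decide⟩

instance : DecidableRel dynkinE6.Adj := inferInstanceAs (DecidableRel adj6)

lemma det_cartan_dynkinE6 : (Matrix.of (CL.cartan dynkinE6)).det ≠ 0 := by
  rw [Ne, ← Matrix.exists_mulVec_eq_zero_iff]
  rintro ⟨v, hv, h⟩
  have hsum : ∀ f : N6 → ℤ, ∑ i, f i = f m1 + f m2 + f m3 + f m4 + f m5 + f m6 := fun f => by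
    simp [Finset.univ, Fintype.elems, add_assoc]
  have hrow : ∀ i, ∑ j, CL.cartan dynkinE6 i j * v j = 0 := congrFun h
  have h1 : 2 * v m1 - v m2 = 0 := by
    simpa [hsum, CL.cartan, dynkinE6, adj6, sub_eq_add_neg] using hrow m1
  have h2 : -v m1 + 2 * v m2 - v m3 = 0 := by
    simpa [hsum, CL.cartan, dynkinE6, adj6, sub_eq_add_neg] using hrow m2
  have h3 : -v m2 + 2 * v m3 - v m4 - v m5 = 0 := by
    simpa [hsum, CL.cartan, dynkinE6, adj6, sub_eq_add_neg] using hrow m3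
  have h4 : -v m3 + 2 * v m4 = 0 := by
    simpa [hsum, CL.cartan, dynkinE6, adj6] using hrow m4
  have h5 : -v m3 + 2 * v m5 - v m6 = 0 := by
    simpa [hsum, CL.cartan, dynkinE6, adj6, sub_eq_add_neg] using hrow m5
  have h6 : -v m5 + 2 * v m6 = 0 := by
    simpa [hsum, CL.cartan, dynkinE6, adj6] using hrow m6
  refine hv (funext fun i => ?_)
  cases i <;> simp only [Pi.zero_apply] <;> omega

instance : DecidableRel (CL.step adj6 pos16pp) := fun x y => by unfold CL.step; infer_instance

/-- Three maximal chains of `pos16pp`; each color has all its positions on one of them. -/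
def chains16pp : List (List (N6 × ℕ)) :=
  [[(m1, 0), (m2, 1), (m3, 2), (m4, 3), (m3, 4), (m2, 5), (m1, 6), (m2, 7), (m3, 8), (m5, 9),
    (m6, 10)],
   [(m1, 0), (m2, 1), (m3, 2), (m5, 3), (m6, 4), (m5, 5), (m3, 6), (m4, 7), (m3, 8), (m5, 9),
    (m6, 10)],
   [(m1, 0), (m2, 1), (m3, 2), (m4, 3), (m3, 4), (m2, 5), (m3, 6), (m4, 7), (m3, 8), (m5, 9),
    (m6, 10)]]

lemma isChain_of_mem_chains16pp : ∀ l ∈ chains16pp, l.IsChain (CL.step adj6 pos16pp) := by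
  decide

lemma exists_mem_chains16pp : ∀ x ∈ pos16pp, ∀ y ∈ pos16pp, x.1 = y.1 →
    ∃ l ∈ chains16pp, x ∈ l ∧ y ∈ l := by
  decide

lemma isMinuscule_pos16pp : CL.IsMinuscule dynkinE6 pos16pp where
  comparable x y hxy :=
    have ⟨l, hl, hx, hy⟩ := exists_mem_chains16pp x.1 x.2 y.1 y.2 hxy
    CL.ple_or_ple_of_isChain (isChain_of_mem_chains16pp l hl) hx hy
  balanced := by
    decide +kernel

lemma exists_color_pos16pp : ∀ i, ∃ x : pos16pp, x.1.1 = i := by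
  decide

lemma mul_maximalCount_pos16pp (k : ℕ) (i : N6) :
    (k : ℤ) * CL.maximalCount dynkinE6 pos16pp i = if i = m6 then (k : ℤ) else 0 := by
  have hcount : ∀ i, CL.maximalCount dynkinE6 pos16pp i = if i = m6 then 1 else 0 := by
    decide
  rw [hcount]
  split_ifs <;> simp

/-- the Weyl group of `E₆` is finite and
`𝒜(Z^ϱ)·WGF(L6''(k);Z) = 𝒜(Z^{kω₆'+ϱ})` in `ℤ[ℤ^6]`. -/
theorem statement_6 (k : ℕ) :
    ((CL.weyl A6 : Set (Matrix N6 N6 ℤ)).Finite) ∧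
    CL.alt A6 (fun _ => 1) * CL.wgf adj6 pos16pp k (fun _ => True) =
      CL.alt A6 (fun j => (if j = m6 then (k : ℤ) else 0) + 1) := by
  simp_rw [← mul_maximalCount_pos16pp k]
  exact statement_6_general isMinuscule_pos16pp exists_color_pos16pp det_cartan_dynkinE6 k

end
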